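/- arXiv:1805.08901 — 3 statements merged into one kernel-verified Lean document; each statement's English description precedes it below -/
import Mathlib

section
/- Let V be a finite set, G a simple graph on V, and let A, B be disjoint sets with A ∪ B = V. Suppose there exist i ∈ A and j ∈ B such that e_G(i,B) − e_G(i,A) ≥ 1 and e_G(j,A) − e_G(j,B) ≥ 1. Then, with Â = (A \ {i}) ∪ {j} and B̂ = (B \ {j}) ∪ {i}, one has e_G(Â) + e_G(B̂) ≥ e_G(A) + e_G(B). -/
open Finset

/-- Number of edges of `G` with both endpoints in `A`
(counted as ordered adjacent pairs, halved). -/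
def edgesWithin {V : Type*} [DecidableEq V] (G : SimpleGraph V) [DecidableRel G.Adj]
    (A : Finset V) : ℕ :=
  ((A ×ˢ A).filter (fun p => G.Adj p.1 p.2)).card / 2

/-- Number of edges of `G` between the vertex `v` and the vertices of `S`. -/
def edgesBetween {V : Type*} (G : SimpleGraph V) [DecidableRel G.Adj]
    (v : V) (S : Finset V) : ℕ :=
  (S.filter (fun u => G.Adj v u)).card

/-!
Exchanging `v ∈ S` for `w ∉ S` changes the number of edges within `S` by the degree of `w` into `S`
minus that of `v`, corrected by one if `v` and `w` are adjacent, since `v` is no longer there to be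
a neighbour of `w`. A swap is two such exchanges; an edge `ij` costs one in each, and the total gain
in degrees, being at least two, pays for both.
-/

section

variable {V : Type*} [DecidableEq V] (G : SimpleGraph V) [DecidableRel G.Adj]

theorem edgesBetween_erase_add {u : V} {S : Finset V} (hu : u ∈ S) (v : V) :
    edgesBetween G v (S.erase u) + (if G.Adj v u then 1 else 0) = edgesBetween G v S := by
  simp only [edgesBetween, card_filter]
  exact sum_erase_add S _ hu

theorem edgesBetween_erase_self {v : V} {S : Finset V} (hv : v ∈ S) :
    edgesBetween G v (S.erase v) = edgesBetween G v S := by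
  simpa using edgesBetween_erase_add G hv v

theorem card_filter_adj_insert_product_insert {v : V} {S : Finset V} (hv : v ∉ S) :
    #{p ∈ insert v S ×ˢ insert v S | G.Adj p.1 p.2} =
      #{p ∈ S ×ˢ S | G.Adj p.1 p.2} + 2 * edgesBetween G v S := by
  have pairs_ending_at_v : #{u ∈ S | G.Adj u v} = edgesBetween G v S := by
    simp only [edgesBetween, G.adj_comm v]
  calc #{p ∈ insert v S ×ˢ insert v S | G.Adj p.1 p.2}
      = #{p ∈ S ×ˢ S | G.Adj p.1 p.2} + #{u ∈ S | G.Adj u v} + edgesBetween G v S := by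
        simp only [edgesBetween, card_filter, sum_product, sum_insert hv, sum_add_distrib,
          G.irrefl, if_false]
        ring
    _ = #{p ∈ S ×ˢ S | G.Adj p.1 p.2} + 2 * edgesBetween G v S := by
        rw [pairs_ending_at_v]
        ring

theorem edgesWithin_insert {v : V} {S : Finset V} (hv : v ∉ S) :
    edgesWithin G (insert v S) = edgesWithin G S + edgesBetween G v S := by
  rw [edgesWithin, card_filter_adj_insert_product_insert G hv,
    Nat.add_mul_div_left _ _ two_pos, edgesWithin]

theorem edgesWithin_insert_erase {v w : V} {S : Finset V} (hv : v ∈ S) (hw : w ∉ S) :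
    edgesWithin G (insert w (S.erase v)) + edgesBetween G v S + (if G.Adj w v then 1 else 0) =
      edgesWithin G S + edgesBetween G w S := by
  have removal : edgesWithin G (S.erase v) + edgesBetween G v S = edgesWithin G S := by
    rw [← edgesBetween_erase_self G hv, ← edgesWithin_insert G (notMem_erase v S),
      insert_erase hv]
  rw [edgesWithin_insert G (mt mem_of_mem_erase hw), ← removal, ← edgesBetween_erase_add G hv w]
  ring

theorem edgesWithin_swap {A B : Finset V} {i j : V}
    (hiA : i ∈ A) (hiB : i ∉ B) (hjB : j ∈ B) (hjA : j ∉ A) :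
    edgesWithin G (insert j (A.erase i)) + edgesWithin G (insert i (B.erase j)) +
        (edgesBetween G i A + edgesBetween G j B) + 2 * (if G.Adj i j then 1 else 0) =
      edgesWithin G A + edgesWithin G B + (edgesBetween G i B + edgesBetween G j A) := by
  have exchangeA := edgesWithin_insert_erase G hiA hjA
  have exchangeB := edgesWithin_insert_erase G hjB hiB
  simp only [G.adj_comm j i] at exchangeA
  linarith

theorem swap_increases_within_edges_general {A B : Finset V} {i j : V}
    (hiA : i ∈ A) (hiB : i ∉ B) (hjB : j ∈ B) (hjA : j ∉ A)
    (gain : (2 : ℤ) ≤ ((edgesBetween G i B : ℤ) - edgesBetween G i A) +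
      ((edgesBetween G j A : ℤ) - edgesBetween G j B)) :
    edgesWithin G A + edgesWithin G B
      ≤ edgesWithin G (insert j (A.erase i)) + edgesWithin G (insert i (B.erase j)) := by
  have swap := edgesWithin_swap G hiA hiB hjB hjA
  have edge_le_one : (if G.Adj i j then 1 else 0) ≤ 1 := by split_ifs <;> simp
  omega

end

theorem swap_increases_within_edges
    {V : Type*} [Fintype V] [DecidableEq V]
    (G : SimpleGraph V) [DecidableRel G.Adj]
    (A B : Finset V) (hdisj : Disjoint A B) (hcover : A ∪ B = Finset.univ)
    (i j : V) (hi : i ∈ A) (hj : j ∈ B)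
    (h1 : (1 : ℤ) ≤ (edgesBetween G i B : ℤ) - (edgesBetween G i A : ℤ))
    (h2 : (1 : ℤ) ≤ (edgesBetween G j A : ℤ) - (edgesBetween G j B : ℤ)) :
    edgesWithin G A + edgesWithin G B
      ≤ edgesWithin G (insert j (A.erase i)) + edgesWithin G (insert i (B.erase j)) :=
  swap_increases_within_edges_general G hi (disjoint_left.mp hdisj hi) hj
    (disjoint_right.mp hdisj hj) (add_le_add h1 h2)
end

section
/- Fix reals a > b > 0. For each integer n ≥ 3, let Z₁, …, Z_{⌈n/2⌉} be i.i.d. Bernoulli with success probability min(1, b·log n/n) and W₁, …, W_{⌈n/2⌉} be i.i.d. Bernoulli with success probability min(1, a·log n/n), all mutually independent. Then for every ε > 0 there exists N such that for all n ≥ N, P( Σ_{k=1}^{⌈n/2⌉} Z_k − Σ_{k=1}^{⌈n/2⌉} W_k ≥ 1 + log n / log log n ) ≥ n^{−(√a−√b)²/2 − ε}. -/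
open MeasureTheory ProbabilityTheory Filter

/-- `⌈n/2⌉`. -/
noncomputable def half (n : ℕ) : ℕ := ⌈(n : ℝ) / 2⌉₊

/-!
Let `L = log n` and let `S = ∑ Z`, `T = ∑ W`, which are binomial with means close to `b L / 2` and
`a L / 2`. Stirling's formula shows that hitting a prescribed value close to `x L` costs each of
them a factor `exp (-(r + o(1)) L)`, where `r` is the Poisson rate at `x`. The difference `S - T`
reaches a threshold `t = o(L)` as soon as `T` hits `⌈κ L⌉` and `S` hits `⌈κ L⌉ + ⌈t⌉`, and the extra
`⌈t⌉` does not change the rate. At the geometric mean `κ = √(a b) / 2` the logarithmic terms of the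
two rates cancel, and the rates add up to `(√a - √b) ^ 2 / 2`.
-/

open Asymptotics unitInterval
open scoped Topology Nat

section BernoulliSums

variable {Ω : Type*} {mΩ : MeasurableSpace Ω} {P : Measure Ω}

lemma hasLaw_bernoulliMeasure_of_measure_eq [IsProbabilityMeasure P] {S : Type*}
    [MeasurableSpace S] [MeasurableSingletonClass S] {X : Ω → S} {x y : S} {p : I} (hxy : x ≠ y)
    (hX : AEMeasurable X P) (hx : P {ω | X ω = x} = ENNReal.ofReal p)
    (hy : P {ω | X ω = y} = 1 - ENNReal.ofReal p) : HasLaw X Ber(x, y, p) P := by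
  have hmeas (z : S) : NullMeasurableSet {ω | X ω = z} P :=
    hX.nullMeasurableSet_preimage (measurableSet_singleton z)
  have htwo : ∀ᵐ ω ∂P, X ω = x ∨ X ω = y := by
    refine (prob_compl_eq_zero_iff₀ ((hmeas x).union (hmeas y))).2 ?_
    have hdisj : Disjoint {ω | X ω = x} {ω | X ω = y} :=
      Set.disjoint_left.2 fun ω h₁ h₂ => hxy (h₁.symm.trans h₂)
    rw [measure_union₀ (hmeas y) hdisj.aedisjoint, hx, hy]
    exact add_tsub_cancel_of_le (ENNReal.ofReal_le_one.2 p.2.2)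
  have hpx : P (X ⁻¹' {x}) = toNNReal p := hx.trans (ENNReal.ofReal_eq_coe_nnreal p.2.1)
  have hpy : P (X ⁻¹' {y}) = toNNReal (σ p) := by
    refine hy.trans ?_
    rw [← ENNReal.ofReal_one, ← ENNReal.ofReal_sub _ p.2.1]
    exact ENNReal.ofReal_eq_coe_nnreal (σ p).2.1
  refine ⟨hX, ?_⟩
  rw [(Measure.ae_eq_or_eq_iff_map_eq_dirac_add_dirac hX hxy).1 htwo, hpx, hpy]
  rfl

lemma ae_eq_or_eq_of_hasLaw_bernoulliMeasure {S : Type*}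
    [MeasurableSpace S] [MeasurableSingletonClass S] {X : Ω → S} {x y : S} {p : I}
    (hX : HasLaw X Ber(x, y, p) P) : ∀ᵐ ω ∂P, X ω = x ∨ X ω = y := by
  have hmeas : MeasurableSet {z | z = x ∨ z = y} :=
    (measurableSet_singleton x).union (measurableSet_singleton y)
  rw [hX.ae_iff (p := fun z => z = x ∨ z = y) hmeas.mem, ae_iff]
  exact bernoulliMeasure_apply_of_notMem_of_notMem p hmeas.compl (by simp) (by simp)

lemma isSetBernoulli_setOf_eq {ι S : Type*} [Finite ι] [MeasurableSpace S]
    [MeasurableSingletonClass S] {X : ι → Ω → S} {x y : S} {p : I} (hxy : x ≠ y)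
    (hindep : iIndepFun X P) (hX : ∀ i, HasLaw (X i) Ber(x, y, p) P) :
    IsSetBernoulli (fun ω => {i | X i ω = x}) Set.univ p P := by
  have := Fintype.ofFinite ι
  have hmeas : Measurable (· = x) := (measurableSet_singleton x).mem
  have hprop (i : ι) : HasLaw (fun ω => X i ω = x) Ber(True, False, p) P := by
    refine HasLaw.fun_comp (Y := (· = x)) ⟨by fun_prop, ?_⟩ (hX i)
    rw [map_bernoulliMeasure' x y hmeas p]
    simp only [hxy.symm]
  have hpi := (hindep.comp (fun _ => (· = x)) fun _ => hmeas).hasLaw_pi hprop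
  refine HasLaw.fun_comp (Y := fun q : ι → Prop => {i | q i}) ⟨by fun_prop, ?_⟩ hpi
  simp only [setBernoulli_eq_map, Set.mem_univ, Measure.infinitePi_eq_pi, bernoulliMeasure_def]

lemma map_ncard_setBernoulli_univ (ι : Type*) [Fintype ι] (p : I) :
    (setBer((Set.univ : Set ι), p)).map Set.ncard = Bin(Fintype.card ι, p) :=
  Measure.ext_of_singleton fun k => by
    rw [map_ncard_setBernoulli_singleton Set.finite_univ, binomial_singleton, Set.ncard_univ,
      Nat.card_eq_fintype_card]

lemma hasLaw_sum_binomial {ι R : Type*} [Fintype ι] [AddCommMonoidWithOne R] [NeZero (1 : R)]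
    [MeasurableSpace R] [MeasurableSingletonClass R] {X : ι → Ω → R} {p : I}
    (hindep : iIndepFun X P) (hX : ∀ i, HasLaw (X i) Ber(1, 0, p) P) :
    HasLaw (fun ω => ∑ i, X i ω) Bin(R, Fintype.card ι, p) P := by
  classical
  have hncard : HasLaw (fun ω => {i | X i ω = 1}.ncard) Bin(Fintype.card ι, p) P :=
    HasLaw.fun_comp ⟨by fun_prop, map_ncard_setBernoulli_univ ι p⟩
      (isSetBernoulli_setOf_eq one_ne_zero hindep hX)
  refine (HasLaw.fun_comp ⟨by fun_prop, rfl⟩ hncard : HasLaw _ Bin(R, _, p) P).congr ?_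
  filter_upwards [ae_all_iff.2 fun i => ae_eq_or_eq_of_hasLaw_bernoulliMeasure (hX i)] with ω hω
  calc ∑ i, X i ω = ∑ i, if X i ω = 1 then 1 else 0 :=
        Finset.sum_congr rfl fun i _ => by rcases hω i with h | h <;> simp [h]
    _ = ({i | X i ω = 1}.ncard : R) := by
        rw [Finset.sum_boole, Set.ncard_eq_toFinset_card', Set.toFinset_ofPred]

lemma indepFun_sum_sum_of_iIndepFun_sumElim {ι κ M : Type*} [Fintype ι] [Fintype κ]
    [AddCommMonoid M] [MeasurableSpace M] [MeasurableAdd₂ M] {X : ι → Ω → M} {Y : κ → Ω → M}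
    (hindep : iIndepFun (Sum.elim X Y) P) (hX : ∀ i, AEMeasurable (X i) P)
    (hY : ∀ j, AEMeasurable (Y j) P) :
    (fun ω => ∑ i, X i ω) ⟂ᵢ[P] (fun ω => ∑ j, Y j ω) := by
  have hsum (s : Finset (ι ⊕ κ)) : Measurable fun v : s → M => ∑ i, v i := by fun_prop
  have h := (hindep.indepFun_finset₀ (Finset.univ.map .inl) (Finset.univ.map .inr)
    (Finset.disjoint_map_inl_map_inr _ _) (Sum.rec hX hY)).comp (hsum _) (hsum _)
  have hl (ω : Ω) : ∑ i : Finset.univ.map (.inl : ι ↪ ι ⊕ κ), Sum.elim X Y i ω = ∑ i, X i ω := by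
    rw [Finset.sum_coe_sort (Finset.univ.map .inl) (fun i => Sum.elim X Y i ω), Finset.sum_map]
    rfl
  have hr (ω : Ω) : ∑ j : Finset.univ.map (.inr : κ ↪ ι ⊕ κ), Sum.elim X Y j ω = ∑ j, Y j ω := by
    rw [Finset.sum_coe_sort (Finset.univ.map .inr) (fun j => Sum.elim X Y j ω), Finset.sum_map]
    rfl
  simpa only [Function.comp_def, hl, hr] using h

end BernoulliSums

lemma log_factorial_le_stirling {n : ℕ} (hn : n ≠ 0) :
    Real.log n ! ≤ n * Real.log n - n + Real.log n / 2 + 1 := by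
  obtain ⟨k, rfl⟩ := Nat.exists_eq_succ_of_ne_zero hn
  have h := Stirling.log_stirlingSeq'_antitone (Nat.zero_le k)
  simp only [Function.comp_apply, Nat.succ_eq_add_one, zero_add] at h
  rw [Stirling.log_stirlingSeq_formula, Stirling.stirlingSeq_one,
    Real.log_div (by positivity) (by positivity), Real.log_mul (by positivity) (by positivity),
    Real.log_div (by positivity) (by positivity), Real.log_exp,
    Real.log_sqrt (by positivity)] at h
  linarith

lemma pow_sub_div_factorial_le_choose {k m : ℕ} (hkm : k ≤ m) :
    ((m : ℝ) - k) ^ k / k ! ≤ m.choose k := by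
  refine le_trans ?_ (Nat.pow_le_choose k m)
  have hsub : (m : ℝ) - k ≤ (m + 1 - k : ℕ) := by
    rw [Nat.cast_sub (by omega)]; push_cast; linarith
  have : (0 : ℝ) ≤ m - k := sub_nonneg.2 (Nat.cast_le.2 hkm)
  gcongr

lemma le_log_one_sub {x : ℝ} (hx : x < 1) : -(x / (1 - x)) ≤ Real.log (1 - x) := by
  have h : 0 < 1 - x := sub_pos.2 hx
  refine le_of_eq_of_le ?_ (Real.one_sub_inv_le_log_of_pos h)
  field_simp
  ring

lemma le_log_binomial_real_singleton {m k : ℕ} {p : I} (hk : k ≠ 0) (hkm : k < m)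
    (hp : (0 : ℝ) < p) (hp1 : (p : ℝ) < 1) :
    k * (Real.log ((m - k) * p / k) + 1) - m * p / (1 - p) - (Real.log k / 2 + 1)
      ≤ Real.log (Bin(m, p).real {k}) := by
  have hmk : (0 : ℝ) < m - k := sub_pos.2 (Nat.cast_lt.2 hkm)
  have : (0 : ℝ) < k := Nat.cast_pos.2 (Nat.pos_of_ne_zero hk)
  have hq : (0 : ℝ) < 1 - p := sub_pos.2 hp1
  have hpmf : ((m : ℝ) - k) ^ k / k ! * p ^ k * (1 - p) ^ m ≤ Bin(m, p).real {k} := by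
    rw [binomial_real_singleton]
    have hchoose := pow_sub_div_factorial_le_choose hkm.le
    have hpow : (1 - p : ℝ) ^ m ≤ (1 - p) ^ (m - k) :=
      pow_le_pow_of_le_one hq.le (sub_le_self 1 hp.le) (Nat.sub_le m k)
    gcongr
  have hm : -(m * (p : ℝ) / (1 - p)) ≤ m * Real.log (1 - p) := by
    rw [mul_div_assoc, ← mul_neg]
    exact mul_le_mul_of_nonneg_left (le_log_one_sub hp1) m.cast_nonneg
  calc _ ≤ k * Real.log (m - k) - Real.log k ! + k * Real.log p + m * Real.log (1 - p) := by
        rw [Real.log_div (by positivity) (by positivity),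
          Real.log_mul (by positivity) (by positivity)]
        linarith [log_factorial_le_stirling hk]
    _ = Real.log (((m : ℝ) - k) ^ k / k ! * p ^ k * (1 - p) ^ m) := by
        rw [Real.log_mul (by positivity) (by positivity),
          Real.log_mul (by positivity) (by positivity),
          Real.log_div (by positivity) (by positivity), Real.log_pow, Real.log_pow, Real.log_pow]
    _ ≤ _ := Real.log_le_log (by positivity) hpmf

/-- The large-deviation (Cramér) rate function of the Poisson law of mean `μ`: when `m * p` is of
order `μ * L`, it is the exponential cost per unit of `L` for a `Bin(m, p)` variable to be near
`x * L`. Meant for `0 < μ`; division by zero makes `poissonRate 0 x = -x`. -/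
noncomputable def poissonRate (μ x : ℝ) : ℝ := x * Real.log (x / μ) - x + μ

lemma poissonRate_add_poissonRate_sqrt_mul {α β : ℝ} (hα : 0 < α) (hβ : 0 < β) :
    poissonRate α √(α * β) + poissonRate β √(α * β) = (√α - √β) ^ 2 := by
  have hlog : Real.log (√(α * β) / α) + Real.log (√(α * β) / β) = 0 := by
    rw [← Real.log_mul (by positivity) (by positivity), div_mul_div_comm,
      Real.mul_self_sqrt (by positivity), div_self (by positivity), Real.log_one]
  simp only [poissonRate]
  linear_combination √(α * β) * hlog - Real.sq_sqrt hα.le - Real.sq_sqrt hβ.le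
    - 2 * Real.sqrt_mul hα.le β

section Asymptotics

variable {ι : Type*} {l : Filter ι} {L : ι → ℝ}

lemma tendsto_log_div_zero_of_tendsto_div {x : ι → ℝ} {κ : ℝ} (hκ : 0 < κ)
    (hL : Tendsto L l atTop) (hx : Tendsto (fun i => x i / L i) l (𝓝 κ)) :
    Tendsto (fun i => Real.log (x i) / L i) l (𝓝 0) := by
  have hx_atTop : Tendsto x l atTop := by
    refine (hx.pos_mul_atTop hκ hL).congr' ?_
    filter_upwards [hL.eventually_ne_atTop 0] with i hi using div_mul_cancel₀ _ hi
  have h := (Real.isLittleO_log_id_atTop.tendsto_div_nhds_zero.comp hx_atTop).mul hx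
  rw [zero_mul] at h
  refine h.congr' ?_
  filter_upwards [hx_atTop.eventually_ne_atTop 0] with i hi
  exact div_mul_div_cancel₀ hi

lemma tendsto_natCeil_div_zero {t : ι → ℝ} (hL : Tendsto L l atTop) (ht : t =o[l] L) :
    Tendsto (fun i => (⌈t i⌉₊ : ℝ) / L i) l (𝓝 0) := by
  refine IsLittleO.tendsto_div_nhds_zero (IsBigO.trans_isLittleO (.of_norm_le fun i => ?_)
    (ht.norm_left.add (isLittleO_const_left.2 (.inr (tendsto_norm_atTop_atTop.comp hL)) :
      (fun _ => (1 : ℝ)) =o[l] L)))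
  rw [RCLike.norm_natCast]
  exact (Nat.cast_le.2 (Nat.ceil_mono (le_abs_self _))).trans
    (Nat.ceil_lt_add_one (abs_nonneg _)).le

lemma tendsto_sub_mul_div {m k p : ι → ℝ} {μ κ : ℝ} (hp : Tendsto p l (𝓝 0))
    (hm : Tendsto (fun i => m i * p i / L i) l (𝓝 μ)) (hk : Tendsto (fun i => k i / L i) l (𝓝 κ)) :
    Tendsto (fun i => (m i - k i) * p i / L i) l (𝓝 μ) := by
  simpa [sub_mul, sub_div, mul_div_right_comm] using hm.sub (hk.mul hp)

lemma tendsto_log_binomial_bound_div {m k p : ι → ℝ} {μ κ : ℝ} (hμ : 0 < μ) (hκ : 0 < κ)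
    (hL : Tendsto L l atTop) (hp : Tendsto p l (𝓝 0))
    (hm : Tendsto (fun i => m i * p i / L i) l (𝓝 μ)) (hk : Tendsto (fun i => k i / L i) l (𝓝 κ)) :
    Tendsto (fun i => (k i * (Real.log ((m i - k i) * p i / k i) + 1) - m i * p i / (1 - p i)
      - (Real.log (k i) / 2 + 1)) / L i) l (𝓝 (-poissonRate μ κ)) := by
  have hratio : Tendsto (fun i => (m i - k i) * p i / k i) l (𝓝 (μ / κ)) := by
    refine ((tendsto_sub_mul_div hp hm hk).div hk hκ.ne').congr' ?_
    filter_upwards [hL.eventually_ne_atTop 0] with i hi using div_div_div_cancel_right₀ hi _ _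
  have hq : Tendsto (fun i => 1 - p i) l (𝓝 1) := by simpa using hp.const_sub 1
  have hlog_k : Tendsto (fun i => Real.log (k i) / L i / 2 + (L i)⁻¹) l (𝓝 0) := by
    simpa using ((tendsto_log_div_zero_of_tendsto_div hκ hL hk).div_const 2).add
      (tendsto_inv_atTop_zero.comp hL)
  have hlim := ((hk.mul ((hratio.log (div_pos hμ hκ).ne').add_const 1)).sub
    (hm.div hq one_ne_zero)).sub hlog_k
  have hrate : κ * (Real.log (μ / κ) + 1) - μ / 1 - 0 = -poissonRate μ κ := by
    rw [← inv_div κ μ, Real.log_inv, poissonRate]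
    ring
  rw [hrate] at hlim
  refine hlim.congr fun i => ?_
  simp only [Pi.div_apply]
  ring

lemma eventually_exp_le_binomial_real_singleton {m k : ι → ℕ} {p : ι → I} {μ κ c : ℝ}
    (hμ : 0 < μ) (hκ : 0 < κ) (hL : Tendsto L l atTop)
    (hp : Tendsto (fun i => (p i : ℝ)) l (𝓝 0))
    (hm : Tendsto (fun i => m i * (p i : ℝ) / L i) l (𝓝 μ))
    (hk : Tendsto (fun i => k i / L i) l (𝓝 κ)) (hc : poissonRate μ κ < c) :
    ∀ᶠ i in l, Real.exp (-c * L i) ≤ Bin(m i, p i).real {k i} := by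
  have hlim := tendsto_log_binomial_bound_div hμ hκ hL hp hm hk
  filter_upwards [hlim.eventually_const_lt (neg_lt_neg hc), hL.eventually_gt_atTop 0,
    hm.eventually_const_lt hμ, hk.eventually_const_lt hκ,
    (tendsto_sub_mul_div hp hm hk).eventually_const_lt hμ, hp.eventually_lt_const one_pos]
    with i hi hL0 hmp hkL hsub hp1
  rw [div_pos_iff_of_pos_right hL0] at hmp hkL hsub
  have hk0 : k i ≠ 0 := Nat.cast_ne_zero.1 hkL.ne'
  have hp0 : 0 < (p i : ℝ) := pos_of_mul_pos_right hmp (Nat.cast_nonneg _)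
  have hkm : k i < m i := by
    rw [mul_pos_iff_of_pos_right hp0, sub_pos] at hsub
    exact_mod_cast hsub
  have hpmf_pos : 0 < Bin(m i, p i).real {k i} := by
    have hchoose := Nat.choose_pos hkm.le
    have : 0 < 1 - (p i : ℝ) := sub_pos.2 hp1
    rw [binomial_real_singleton]
    positivity
  rw [← Real.le_log_iff_exp_le hpmf_pos]
  exact ((lt_div_iff₀ hL0).1 hi).le.trans (le_log_binomial_real_singleton hk0 hkm hp0 hp1)

lemma measureReal_eq_of_hasLaw_binomial {Ω R : Type*} {mΩ : MeasurableSpace Ω} {P : Measure Ω}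
    [AddMonoidWithOne R] [CharZero R] [MeasurableSpace R] [MeasurableSingletonClass R]
    {X : Ω → R} {m k : ℕ} {p : I} (hX : HasLaw X Bin(R, m, p) P) :
    P.real {ω | X ω = k} = Bin(m, p).real {k} := by
  rw [hX.measureReal_eq (p := (· = (k : R))) (measurableSet_singleton _), binomial_real_singleton]
  exact map_cast_binomial_real_singleton m k p

lemma binomial_real_mul_le_measureReal_sub {Ω : Type*} {mΩ : MeasurableSpace Ω} {P : Measure Ω}
    {X Y : Ω → ℝ} {m n i j : ℕ} {p q : I} {t : ℝ} (hX : HasLaw X Bin(ℝ, m, p) P)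
    (hY : HasLaw Y Bin(ℝ, n, q) P) (hXY : X ⟂ᵢ[P] Y) (ht : t ≤ i - j) :
    Bin(m, p).real {i} * Bin(n, q).real {j} ≤ P.real {ω | t ≤ X ω - Y ω} := by
  have := hX.isProbabilityMeasure
  have hinter : P.real ({ω | X ω = i} ∩ {ω | Y ω = j})
      = P.real {ω | X ω = i} * P.real {ω | Y ω = j} := by
    rw [measureReal_def, measureReal_def, measureReal_def, ← ENNReal.toReal_mul]
    exact congrArg ENNReal.toReal (hXY.measure_inter_preimage_eq_mul _ _
      (measurableSet_singleton _) (measurableSet_singleton _))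
  rw [← measureReal_eq_of_hasLaw_binomial hX, ← measureReal_eq_of_hasLaw_binomial hY, ← hinter]
  refine measureReal_mono ?_
  rintro ω ⟨hXi, hYj⟩
  change t ≤ X ω - Y ω
  rwa [show X ω = i from hXi, show Y ω = j from hYj]

theorem eventually_exp_le_measureReal_sub_of_hasLaw_binomial {Ω : ι → Type*}
    {mΩ : ∀ i, MeasurableSpace (Ω i)} {P : ∀ i, Measure (Ω i)} {X Y : ∀ i, Ω i → ℝ}
    {m n : ι → ℕ} {p q : ι → I} {t : ι → ℝ} {α β ε : ℝ} (hα : 0 < α) (hβ : 0 < β) (hε : 0 < ε)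
    (hL : Tendsto L l atTop) (ht : t =o[l] L)
    (hX : ∀ᶠ i in l, HasLaw (X i) Bin(ℝ, m i, p i) (P i))
    (hY : ∀ᶠ i in l, HasLaw (Y i) Bin(ℝ, n i, q i) (P i))
    (hXY : ∀ᶠ i in l, X i ⟂ᵢ[P i] Y i)
    (hp : Tendsto (fun i => (p i : ℝ)) l (𝓝 0)) (hq : Tendsto (fun i => (q i : ℝ)) l (𝓝 0))
    (hm : Tendsto (fun i => m i * (p i : ℝ) / L i) l (𝓝 α))
    (hn : Tendsto (fun i => n i * (q i : ℝ) / L i) l (𝓝 β)) :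
    ∀ᶠ i in l, Real.exp (-((√α - √β) ^ 2 + ε) * L i) ≤ (P i).real {ω | t i ≤ X i ω - Y i ω} := by
  set κ := √(α * β)
  have hκ : 0 < κ := Real.sqrt_pos.2 (mul_pos hα hβ)
  let y : ι → ℕ := fun i => ⌈κ * L i⌉₊
  let x : ι → ℕ := fun i => y i + ⌈t i⌉₊
  have hy : Tendsto (fun i => y i / L i) l (𝓝 κ) :=
    (tendsto_nat_ceil_mul_div_atTop hκ.le).comp hL
  have hx : Tendsto (fun i => x i / L i) l (𝓝 κ) := by
    simpa [x, add_div] using hy.add (tendsto_natCeil_div_zero hL ht)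
  have hXx := eventually_exp_le_binomial_real_singleton hα hκ hL hp hm hx
    (lt_add_of_pos_right _ (half_pos hε))
  have hYy := eventually_exp_le_binomial_real_singleton hβ hκ hL hq hn hy
    (lt_add_of_pos_right _ (half_pos hε))
  filter_upwards [hX, hY, hXY, hXx, hYy] with i hXi hYi hXYi hXxi hYyi
  have hle : t i ≤ x i - y i := by simpa [x] using Nat.le_ceil (t i)
  refine le_trans ?_ (binomial_real_mul_le_measureReal_sub hXi hYi hXYi hle)
  refine le_of_eq_of_le ?_ (mul_le_mul hXxi hYyi (Real.exp_nonneg _) measureReal_nonneg)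
  rw [← Real.exp_add, ← poissonRate_add_poissonRate_sqrt_mul hα hβ]
  congr 1
  ring

end Asymptotics

section EdgeProbability

lemma tendsto_half_div_natCast : Tendsto (fun n : ℕ => (half n : ℝ) / n) atTop (𝓝 (1 / 2)) := by
  refine ((tendsto_nat_ceil_mul_div_atTop (R := ℝ) one_half_pos.le).comp
    tendsto_natCast_atTop_atTop).congr fun n => ?_
  rw [Function.comp_apply, half, one_div_mul_eq_div]

/-- The edge probability `min 1 (c * log n / n)` of the stochastic block model, bundled as an
element of the unit interval so that it can parametrize Mathlib's Bernoulli and binomial laws.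
For `c < 0` it is the junk value `0`. -/
noncomputable def edgeProb (c : ℝ) (n : ℕ) : I :=
  Set.projIcc 0 1 zero_le_one (c * Real.log n / n)

lemma coe_edgeProb {c : ℝ} (hc : 0 ≤ c) (n : ℕ) :
    (edgeProb c n : ℝ) = min 1 (c * Real.log n / n) :=
  max_eq_right (le_min zero_le_one
    (div_nonneg (mul_nonneg hc (Real.log_natCast_nonneg n)) n.cast_nonneg))

lemma tendsto_mul_log_div_natCast (c : ℝ) :
    Tendsto (fun n : ℕ => c * Real.log n / n) atTop (𝓝 0) := by
  simpa only [Function.comp_def, id_eq, mul_div_assoc, mul_zero] using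
    (Real.isLittleO_log_id_atTop.tendsto_div_nhds_zero.comp
      (tendsto_natCast_atTop_atTop (R := ℝ))).const_mul c

lemma edgeProb_eventuallyEq {c : ℝ} (hc : 0 ≤ c) :
    (fun n => (edgeProb c n : ℝ)) =ᶠ[atTop] fun n => c * Real.log n / n := by
  filter_upwards [(tendsto_mul_log_div_natCast c).eventually_lt_const one_pos] with n hn
  rw [coe_edgeProb hc, min_eq_right hn.le]

lemma tendsto_edgeProb {c : ℝ} (hc : 0 ≤ c) :
    Tendsto (fun n => (edgeProb c n : ℝ)) atTop (𝓝 0) :=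
  (tendsto_mul_log_div_natCast c).congr' (edgeProb_eventuallyEq hc).symm

lemma tendsto_log_natCast_atTop : Tendsto (fun n : ℕ => Real.log n) atTop atTop :=
  Real.tendsto_log_atTop.comp tendsto_natCast_atTop_atTop

lemma tendsto_half_mul_edgeProb_div_log {c : ℝ} (hc : 0 ≤ c) :
    Tendsto (fun n => half n * (edgeProb c n : ℝ) / Real.log n) atTop (𝓝 (c / 2)) := by
  have h := tendsto_half_div_natCast.mul_const c
  rw [one_div_mul_eq_div] at h
  refine h.congr' ?_
  filter_upwards [edgeProb_eventuallyEq hc, tendsto_log_natCast_atTop.eventually_ne_atTop 0]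
    with n hn hlog
  rw [hn]
  field_simp

lemma hasLaw_sum_edgeProb {Ω κ R : Type*} {mΩ : MeasurableSpace Ω} {P : Measure Ω} [Fintype κ]
    [AddCommMonoidWithOne R] [NeZero (1 : R)] [MeasurableSpace R] [MeasurableSingletonClass R]
    {X : κ → Ω → R} {c : ℝ} {n : ℕ} (hc : 0 ≤ c) (hindep : iIndepFun X P)
    (hmX : ∀ k, AEMeasurable (X k) P)
    (hX : ∀ k, P {ω | X k ω = 1} = ENNReal.ofReal (min 1 (c * Real.log n / n)) ∧
      P {ω | X k ω = 0} = 1 - ENNReal.ofReal (min 1 (c * Real.log n / n))) :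
    HasLaw (fun ω => ∑ k, X k ω) Bin(R, Fintype.card κ, edgeProb c n) P := by
  have := hindep.isProbabilityMeasure
  simp only [← coe_edgeProb hc] at hX
  exact hasLaw_sum_binomial hindep fun k =>
    hasLaw_bernoulliMeasure_of_measure_eq one_ne_zero (hmX k) (hX k).1 (hX k).2

end EdgeProbability

lemma isLittleO_one_add_log_div_log_log :
    (fun x : ℝ => 1 + Real.log x / Real.log (Real.log x)) =o[atTop] Real.log := by
  refine Real.isLittleO_const_log_atTop.add ?_
  have h := tendsto_inv_atTop_zero.comp (Real.tendsto_log_atTop.comp Real.tendsto_log_atTop)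
  simpa only [Function.comp_def, div_eq_mul_inv, mul_one] using
    (isBigO_refl Real.log atTop).mul_isLittleO ((isLittleO_one_iff ℝ).2 h)

lemma sq_sqrt_half_sub_sqrt_half {a b : ℝ} (ha : 0 ≤ a) (hb : 0 ≤ b) :
    (√(b / 2) - √(a / 2)) ^ 2 = (√a - √b) ^ 2 / 2 := by
  rw [Real.sqrt_div hb, Real.sqrt_div ha, ← sub_div, div_pow, Real.sq_sqrt zero_le_two, sub_sq_comm]

theorem sbm_llr_lower_bound_no_side_info_general {a b : ℝ} (ha : 0 < a) (hb : 0 < b)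
    {Ω : ℕ → Type*} {mΩ : ∀ n, MeasurableSpace (Ω n)} {P : ∀ n, Measure (Ω n)}
    {Z W : ∀ n, Fin (half n) → Ω n → ℝ} {t : ℕ → ℝ} (ht : t =o[atTop] fun n : ℕ => Real.log n)
    (hmZ : ∀ᶠ n in atTop, ∀ k, AEMeasurable (Z n k) (P n))
    (hmW : ∀ᶠ n in atTop, ∀ k, AEMeasurable (W n k) (P n))
    (hindep : ∀ᶠ n in atTop, iIndepFun (Sum.elim (Z n) (W n)) (P n))
    (hZ : ∀ᶠ n in atTop, ∀ k,
      P n {ω | Z n k ω = 1} = ENNReal.ofReal (min 1 (b * Real.log n / n)) ∧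
      P n {ω | Z n k ω = 0} = 1 - ENNReal.ofReal (min 1 (b * Real.log n / n)))
    (hW : ∀ᶠ n in atTop, ∀ k,
      P n {ω | W n k ω = 1} = ENNReal.ofReal (min 1 (a * Real.log n / n)) ∧
      P n {ω | W n k ω = 0} = 1 - ENNReal.ofReal (min 1 (a * Real.log n / n)))
    {ε : ℝ} (hε : 0 < ε) :
    ∀ᶠ n : ℕ in atTop, (n : ℝ) ^ (-((√a - √b) ^ 2) / 2 - ε)
      ≤ (P n).real {ω | t n ≤ (∑ k, Z n k ω) - ∑ k, W n k ω} := by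
  have hsumZ : ∀ᶠ n in atTop,
      HasLaw (fun ω => ∑ k, Z n k ω) Bin(ℝ, half n, edgeProb b n) (P n) := by
    filter_upwards [hmZ, hindep, hZ] with n hmZn hindn hZn
    have hindZ : iIndepFun (Z n) (P n) := (hindn.precomp Sum.inl_injective :)
    simpa only [Fintype.card_fin] using hasLaw_sum_edgeProb hb.le hindZ hmZn hZn
  have hsumW : ∀ᶠ n in atTop,
      HasLaw (fun ω => ∑ k, W n k ω) Bin(ℝ, half n, edgeProb a n) (P n) := by
    filter_upwards [hmW, hindep, hW] with n hmWn hindn hWn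
    have hindW : iIndepFun (W n) (P n) := (hindn.precomp Sum.inr_injective :)
    simpa only [Fintype.card_fin] using hasLaw_sum_edgeProb ha.le hindW hmWn hWn
  have hsum_indep : ∀ᶠ n in atTop,
      (fun ω => ∑ k, Z n k ω) ⟂ᵢ[P n] (fun ω => ∑ k, W n k ω) := by
    filter_upwards [hmZ, hmW, hindep] with n hmZn hmWn hindn
    exact indepFun_sum_sum_of_iIndepFun_sumElim hindn hmZn hmWn
  filter_upwards [eventually_ne_atTop 0, eventually_exp_le_measureReal_sub_of_hasLaw_binomial
    (half_pos hb) (half_pos ha) hε tendsto_log_natCast_atTop ht hsumZ hsumW hsum_indep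
    (tendsto_edgeProb hb.le) (tendsto_edgeProb ha.le) (tendsto_half_mul_edgeProb_div_log hb.le)
    (tendsto_half_mul_edgeProb_div_log ha.le)] with n hn0 hn
  refine le_of_eq_of_le ?_ hn
  rw [sq_sqrt_half_sub_sqrt_half ha.le hb.le, Real.rpow_def_of_pos (by positivity)]
  congr 1
  ring

theorem sbm_llr_lower_bound_no_side_info
    (a b : ℝ) (hb : 0 < b) (hab : b < a)
    (Ω : ℕ → Type*) (mΩ : ∀ n, MeasurableSpace (Ω n))
    (P : ∀ n, Measure (Ω n)) (hP : ∀ n, IsProbabilityMeasure (P n))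
    (Z W : ∀ n, Fin (half n) → Ω n → ℝ)
    (hmZ : ∀ n k, Measurable (Z n k)) (hmW : ∀ n k, Measurable (W n k))
    (hindep : ∀ n, 3 ≤ n →
      iIndepFun (Sum.elim (Z n) (W n)) (P n))
    (hZ : ∀ n, 3 ≤ n → ∀ k,
      P n {ω | Z n k ω = 1} = ENNReal.ofReal (min 1 (b * Real.log n / n)) ∧
      P n {ω | Z n k ω = 0} = 1 - ENNReal.ofReal (min 1 (b * Real.log n / n)))
    (hW : ∀ n, 3 ≤ n → ∀ k,
      P n {ω | W n k ω = 1} = ENNReal.ofReal (min 1 (a * Real.log n / n)) ∧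
      P n {ω | W n k ω = 0} = 1 - ENNReal.ofReal (min 1 (a * Real.log n / n))) :
    ∀ ε > (0 : ℝ), ∃ N : ℕ, ∀ n ≥ N,
      (n : ℝ) ^ (-((Real.sqrt a - Real.sqrt b) ^ 2) / 2 - ε)
        ≤ (P n {ω | 1 + Real.log n / Real.log (Real.log n)
            ≤ (∑ k, Z n k ω) - (∑ k, W n k ω)}).toReal := by
  intro ε hε
  have ht := isLittleO_one_add_log_div_log_log.comp_tendsto (tendsto_natCast_atTop_atTop (R := ℝ))
  have from_three {p : ℕ → Prop} (h : ∀ n, 3 ≤ n → p n) := (eventually_ge_atTop 3).mono h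
  exact eventually_atTop.1 (sbm_llr_lower_bound_no_side_info_general (hb.trans hab) hb ht
    (.of_forall fun n k => (hmZ n k).aemeasurable) (.of_forall fun n k => (hmW n k).aemeasurable)
    (from_three hindep) (from_three hZ) (from_three hW) hε)
end

section
/- Fix reals a > b > 0. For each integer n ≥ 3, let Z₁, …, Z_{⌈n/2⌉} be i.i.d. Bernoulli with success probability min(1, b·log n/n) and W₁, …, W_{⌈n/2⌉} be i.i.d. Bernoulli with success probability min(1, a·log n/n), all mutually independent. Then for every ε > 0 there exists N such that for all n ≥ N, P( Σ_{k=1}^{⌈n/2⌉} (Z_k − W_k) ≥ 0 ) ≤ n^{−(√a−√b)²/2 + ε}. -/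
open MeasureTheory ProbabilityTheory Filter

/-!
By convexity of `exp`, a `[0, 1]`-valued variable of mean `p` has moment generating function at
most `exp (p (eᵗ - 1))`, as if it were Poisson. For independent sums `S`, `T` of such variables,
with means `p ≤ q`, Chernoff's method bounds `P(T ≤ S)` by `exp (p (eᵗ - 1) + q (e⁻ᵗ - 1))` for
every `t ≥ 0`; the optimal choice `eᵗ = √(q / p)` turns this into `exp (-(√q - √p)²)`.
With about `n / 2` summands of mean `b log n / n` and `a log n / n`, this is
`n ^ (-(√a - √b)² / 2)`.
-/

section Real

open Real

lemma exp_mul_le_one_add_mul_of_mem_Icc {x : ℝ} (hx : x ∈ Set.Icc 0 1) (t : ℝ) :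
    exp (t * x) ≤ 1 + x * (exp t - 1) := by
  have := convexOn_exp.2 (Set.mem_univ 0) (Set.mem_univ t) (sub_nonneg.2 hx.2) hx.1 (by ring)
  simp only [smul_eq_mul, mul_zero, zero_add, exp_zero, mul_one] at this
  rw [mul_comm t x]
  linarith

lemma le_exp_neg_sq_sqrt_sub_sqrt {x p q : ℝ} (hp : 0 ≤ p) (hpq : p ≤ q)
    (h : ∀ t, 0 ≤ t → x ≤ exp (p * (exp t - 1) + q * (exp (-t) - 1))) :
    x ≤ exp (-(√q - √p) ^ 2) := by
  rcases hp.eq_or_lt with rfl | hp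
  -- For `p = 0 < q` the infimum over `t` is only approached as `t → ∞`.
  · have hlim : Tendsto (fun t ↦ exp (0 * (exp t - 1) + q * (exp (-t) - 1))) atTop
        (nhds (exp (-(√q - √0) ^ 2))) := by
      have := ((tendsto_exp_neg_atTop_nhds_zero.sub_const 1).const_mul q).rexp
      simpa [sq_sqrt hpq] using this
    exact ge_of_tendsto hlim ((eventually_ge_atTop 0).mono h)
  · have hsp : 0 < √p := sqrt_pos.2 hp
    have hsq : 0 < √q := sqrt_pos.2 (hp.trans_le hpq)
    have hratio : 1 ≤ √q / √p := (one_le_div hsp).2 (sqrt_le_sqrt hpq)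
    convert h (log (√q / √p)) (log_nonneg hratio) using 2
    rw [exp_neg, exp_log (by positivity), inv_div]
    calc -(√q - √p) ^ 2
        = √p * √q - √p ^ 2 + (√q * √p - √q ^ 2) := by ring
      _ = p / √p * √q - p + (q / √q * √p - q) := by
          rw [div_sqrt, div_sqrt, sq_sqrt hp.le, sq_sqrt (hp.le.trans hpq)]
      _ = p * (√q / √p - 1) + q * (√p / √q - 1) := by ring

lemma sq_sqrt_mul_sub_sqrt_mul {c : ℝ} (hc : 0 ≤ c) (x y : ℝ) :
    (√(c * x) - √(c * y)) ^ 2 = c * (√x - √y) ^ 2 := by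
  rw [sqrt_mul hc, sqrt_mul hc, ← mul_sub, mul_pow, sq_sqrt hc]

lemma eventually_mul_log_natCast_le (c : ℝ) : ∀ᶠ n : ℕ in atTop, c * log n ≤ n := by
  have h := (isLittleO_log_id_atTop.const_mul_left c).bound one_pos
  filter_upwards [tendsto_natCast_atTop_atTop.eventually h] with n hn
  simpa using (le_abs_self _).trans hn

end Real

section Probability

variable {Ω : Type*} {mΩ : MeasurableSpace Ω} {μ : Measure Ω}

section ZeroOne

variable {X : Ω → ℝ}

lemma ae_eq_zero_or_eq_one [IsProbabilityMeasure μ] (hX : Measurable X)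
    (h : μ {ω | X ω = 0} = 1 - μ {ω | X ω = 1}) : ∀ᵐ ω ∂μ, X ω = 0 ∨ X ω = 1 := by
  have hm (c : ℝ) : MeasurableSet {ω | X ω = c} := hX (measurableSet_singleton c)
  have hdisj : Disjoint {ω | X ω = 0} {ω | X ω = 1} :=
    Set.disjoint_left.2 fun ω h0 h1 ↦ zero_ne_one (h0.symm.trans h1)
  refine (mem_ae_iff_prob_eq_one ((hm 0).union (hm 1))).2 ?_
  rw [measure_union hdisj (hm 1), h, tsub_add_cancel_of_le prob_le_one]

lemma integral_eq_measureReal_of_ae_zero_or_one (hX : Measurable X)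
    (h : ∀ᵐ ω ∂μ, X ω = 0 ∨ X ω = 1) : μ[X] = μ.real {ω | X ω = 1} := by
  have hind : X =ᵐ[μ] {ω | X ω = 1}.indicator 1 := by
    filter_upwards [h] with ω hω
    rcases hω with hω | hω <;> simp [Set.indicator, hω]
  have hm : MeasurableSet {ω | X ω = 1} := hX (measurableSet_singleton 1)
  rw [integral_congr_ae hind, integral_indicator_one hm]

lemma ae_mem_Icc_and_integral_eq_of_bernoulli [IsProbabilityMeasure μ] {p : ℝ} (hp : 0 ≤ p)
    (hX : Measurable X) (h1 : μ {ω | X ω = 1} = ENNReal.ofReal p)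
    (h0 : μ {ω | X ω = 0} = 1 - ENNReal.ofReal p) :
    (∀ᵐ ω ∂μ, X ω ∈ Set.Icc 0 1) ∧ μ[X] = p := by
  have hX01 := ae_eq_zero_or_eq_one hX (h1 ▸ h0)
  refine ⟨hX01.mono fun ω hω ↦ by rcases hω with hω | hω <;> simp [hω], ?_⟩
  rw [integral_eq_measureReal_of_ae_zero_or_one hX hX01, measureReal_def, h1,
    ENNReal.toReal_ofReal hp]

end ZeroOne

lemma mgf_le_exp_of_mem_Icc [IsProbabilityMeasure μ] {X : Ω → ℝ} (hX : AEMeasurable X μ)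
    (h01 : ∀ᵐ ω ∂μ, X ω ∈ Set.Icc 0 1) (t : ℝ) :
    mgf X μ t ≤ Real.exp (μ[X] * (Real.exp t - 1)) := by
  have hint : Integrable (fun ω ↦ X ω * (Real.exp t - 1)) μ :=
    (Integrable.of_mem_Icc 0 1 hX h01).mul_const _
  calc mgf X μ t
      ≤ ∫ ω, 1 + X ω * (Real.exp t - 1) ∂μ :=
        integral_mono_ae (integrable_exp_mul_of_mem_Icc hX h01) ((integrable_const 1).add hint)
          (h01.mono fun ω hω ↦ exp_mul_le_one_add_mul_of_mem_Icc hω t)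
    _ = μ[X] * (Real.exp t - 1) + 1 := by
        rw [integral_add (integrable_const 1) hint, integral_mul_const]
        simp [add_comm]
    _ ≤ Real.exp (μ[X] * (Real.exp t - 1)) := Real.add_one_le_exp _

lemma measureReal_le_le_mgf_mul_mgf [IsFiniteMeasure μ] {S T : Ω → ℝ} (hST : IndepFun S T μ)
    {t : ℝ} (ht : 0 ≤ t) (hS : Integrable (fun ω ↦ Real.exp (t * S ω)) μ)
    (hT : Integrable (fun ω ↦ Real.exp (-t * T ω)) μ) :
    μ.real {ω | T ω ≤ S ω} ≤ mgf S μ t * mgf T μ (-t) := by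
  have hindep : IndepFun S (-T) μ := hST.comp measurable_id measurable_neg
  have hT' : Integrable (fun ω ↦ Real.exp (t * (-T) ω)) μ := by simpa using hT
  have hchernoff := measure_ge_le_exp_mul_mgf 0 ht (hindep.integrable_exp_mul_add hS hT')
  rw [hindep.mgf_add hS.aestronglyMeasurable hT'.aestronglyMeasurable, mgf_neg] at hchernoff
  simpa [← sub_eq_add_neg] using hchernoff

section Sums

variable {ι κ : Type*} [Fintype ι] [Fintype κ]

lemma indepFun_sum_inl_sum_inr {Z : ι → Ω → ℝ} {W : κ → Ω → ℝ}
    (hindep : iIndepFun (Sum.elim Z W) μ) (hZ : ∀ i, AEMeasurable (Z i) μ)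
    (hW : ∀ j, AEMeasurable (W j) μ) : IndepFun (∑ i, Z i) (∑ j, W j) μ := by
  have hblocks := hindep.indepFun_finset₀ (Finset.univ.map .inl) (Finset.univ.map .inr)
    (Finset.disjoint_map_inl_map_inr _ _) (Sum.rec hZ hW)
  have hsums := hblocks.comp
    (φ := fun x ↦ ∑ i : ι, x ⟨.inl i, Finset.mem_map_of_mem _ (Finset.mem_univ i)⟩)
    (ψ := fun x ↦ ∑ j : κ, x ⟨.inr j, Finset.mem_map_of_mem _ (Finset.mem_univ j)⟩)
    (by fun_prop) (by fun_prop)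
  convert hsums using 1 <;>
  · ext ω
    simp

lemma integrable_exp_mul_sum_of_mem_Icc [IsFiniteMeasure μ] {X : ι → Ω → ℝ}
    (hX : ∀ i, AEMeasurable (X i) μ) (h01 : ∀ i, ∀ᵐ ω ∂μ, X i ω ∈ Set.Icc 0 1) (t : ℝ) :
    Integrable (fun ω ↦ Real.exp (t * (∑ i, X i) ω)) μ := by
  refine integrable_exp_mul_of_mem_Icc (a := 0) (b := Fintype.card ι)
    (Finset.aemeasurable_sum _ fun i _ ↦ hX i) ?_
  filter_upwards [ae_all_iff.2 h01] with ω hω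
  rw [Finset.sum_apply]
  refine ⟨Finset.sum_nonneg fun i _ ↦ (hω i).1, ?_⟩
  simpa using Finset.sum_le_card_nsmul Finset.univ (fun i ↦ X i ω) 1 fun i _ ↦ (hω i).2

lemma mgf_sum_le_exp_of_mem_Icc {X : ι → Ω → ℝ} (hindep : iIndepFun X μ)
    (hX : ∀ i, AEMeasurable (X i) μ) (h01 : ∀ i, ∀ᵐ ω ∂μ, X i ω ∈ Set.Icc 0 1) (t : ℝ) :
    mgf (∑ i, X i) μ t ≤ Real.exp ((∑ i, μ[X i]) * (Real.exp t - 1)) := by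
  have := hindep.isProbabilityMeasure
  rw [hindep.mgf_sum₀ hX, Finset.sum_mul, Real.exp_sum]
  exact Finset.prod_le_prod (fun i _ ↦ mgf_nonneg) fun i _ ↦ mgf_le_exp_of_mem_Icc (hX i) (h01 i) t

theorem measureReal_sum_le_sum_le_exp {Z : ι → Ω → ℝ} {W : κ → Ω → ℝ}
    (hindep : iIndepFun (Sum.elim Z W) μ)
    (hmZ : ∀ i, AEMeasurable (Z i) μ) (hmW : ∀ j, AEMeasurable (W j) μ)
    (hZ : ∀ i, ∀ᵐ ω ∂μ, Z i ω ∈ Set.Icc 0 1) (hW : ∀ j, ∀ᵐ ω ∂μ, W j ω ∈ Set.Icc 0 1)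
    (hmean : ∑ i, μ[Z i] ≤ ∑ j, μ[W j]) :
    μ.real {ω | ∑ j, W j ω ≤ ∑ i, Z i ω} ≤
      Real.exp (-(√(∑ j, μ[W j]) - √(∑ i, μ[Z i])) ^ 2) := by
  have := hindep.isProbabilityMeasure
  have hmean_nonneg : 0 ≤ ∑ i, μ[Z i] := Finset.sum_nonneg fun i _ ↦
    integral_nonneg_of_ae ((hZ i).mono fun ω hω ↦ hω.1)
  refine le_exp_neg_sq_sqrt_sub_sqrt hmean_nonneg hmean fun t ht ↦ ?_
  calc μ.real {ω | ∑ j, W j ω ≤ ∑ i, Z i ω}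
      = μ.real {ω | (∑ j, W j) ω ≤ (∑ i, Z i) ω} := by simp only [Finset.sum_apply]
    _ ≤ mgf (∑ i, Z i) μ t * mgf (∑ j, W j) μ (-t) :=
        measureReal_le_le_mgf_mul_mgf (indepFun_sum_inl_sum_inr hindep hmZ hmW) ht
          (integrable_exp_mul_sum_of_mem_Icc hmZ hZ t)
          (integrable_exp_mul_sum_of_mem_Icc hmW hW (-t))
    _ ≤ Real.exp ((∑ i, μ[Z i]) * (Real.exp t - 1)) *
          Real.exp ((∑ j, μ[W j]) * (Real.exp (-t) - 1)) :=
        mul_le_mul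
          (mgf_sum_le_exp_of_mem_Icc (hindep.precomp Sum.inl_injective) hmZ hZ t)
          (mgf_sum_le_exp_of_mem_Icc (hindep.precomp Sum.inr_injective) hmW hW (-t))
          mgf_nonneg (Real.exp_pos _).le
    _ = _ := (Real.exp_add _ _).symm

theorem measureReal_nonneg_sum_sub_le_rpow {a b : ℝ} (hab : b ≤ a) {n : ℕ} (hn : n ≠ 0)
    (hcard : (n : ℝ) / 2 ≤ Fintype.card ι) {Z W : ι → Ω → ℝ}
    (hindep : iIndepFun (Sum.elim Z W) μ)
    (hmZ : ∀ k, AEMeasurable (Z k) μ) (hmW : ∀ k, AEMeasurable (W k) μ)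
    (hZ : ∀ k, (∀ᵐ ω ∂μ, Z k ω ∈ Set.Icc 0 1) ∧ μ[Z k] = b * Real.log n / n)
    (hW : ∀ k, (∀ᵐ ω ∂μ, W k ω ∈ Set.Icc 0 1) ∧ μ[W k] = a * Real.log n / n) :
    μ.real {ω | 0 ≤ ∑ k, (Z k ω - W k ω)} ≤ (n : ℝ) ^ (-((√a - √b) ^ 2) / 2) := by
  have hn0 : (0 : ℝ) < n := by positivity
  set c : ℝ := Fintype.card ι * (Real.log n / n) with hc
  have hc0 : 0 ≤ c := by positivity
  have hc_half : Real.log n / 2 ≤ c := calc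
    Real.log n / 2 = n / 2 * (Real.log n / n) := by field_simp
    _ ≤ c := by rw [hc]; gcongr
  have hmeanZ : ∑ k, μ[Z k] = c * b := by simp [(hZ _).2, hc]; ring
  have hmeanW : ∑ k, μ[W k] = c * a := by simp [(hW _).2, hc]; ring
  calc μ.real {ω | 0 ≤ ∑ k, (Z k ω - W k ω)}
      = μ.real {ω | ∑ k, W k ω ≤ ∑ k, Z k ω} := by simp only [Finset.sum_sub_distrib, sub_nonneg]
    _ ≤ Real.exp (-(√(∑ k, μ[W k]) - √(∑ k, μ[Z k])) ^ 2) :=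
        measureReal_sum_le_sum_le_exp hindep hmZ hmW (fun k ↦ (hZ k).1) (fun k ↦ (hW k).1)
          (by rw [hmeanZ, hmeanW]; gcongr)
    _ = Real.exp (-(c * (√a - √b) ^ 2)) := by
        rw [hmeanZ, hmeanW, sq_sqrt_mul_sub_sqrt_mul hc0]
    _ ≤ Real.exp (-(Real.log n / 2 * (√a - √b) ^ 2)) := by gcongr
    _ = (n : ℝ) ^ (-((√a - √b) ^ 2) / 2) := by
        rw [Real.rpow_def_of_pos hn0]
        ring_nf

theorem sbm_llr_upper_bound_no_side_info_general {a b : ℝ} (hb : 0 < b) (hab : b ≤ a) {n : ℕ}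
    (hn : n ≠ 0) (han : a * Real.log n ≤ n) (hcard : (n : ℝ) / 2 ≤ Fintype.card ι)
    {Z W : ι → Ω → ℝ} (hindep : iIndepFun (Sum.elim Z W) μ)
    (hmZ : ∀ k, Measurable (Z k)) (hmW : ∀ k, Measurable (W k))
    (hZ : ∀ k, μ {ω | Z k ω = 1} = ENNReal.ofReal (min 1 (b * Real.log n / n)) ∧
      μ {ω | Z k ω = 0} = 1 - ENNReal.ofReal (min 1 (b * Real.log n / n)))
    (hW : ∀ k, μ {ω | W k ω = 1} = ENNReal.ofReal (min 1 (a * Real.log n / n)) ∧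
      μ {ω | W k ω = 0} = 1 - ENNReal.ofReal (min 1 (a * Real.log n / n))) :
    μ.real {ω | 0 ≤ ∑ k, (Z k ω - W k ω)} ≤ (n : ℝ) ^ (-((√a - √b) ^ 2) / 2) := by
  have := hindep.isProbabilityMeasure
  have ha : 0 < a := hb.trans_le hab
  have hmin (c : ℝ) (hca : c ≤ a) : min 1 (c * Real.log n / n) = c * Real.log n / n :=
    min_eq_right (div_le_one_of_le₀ (han.trans' (by gcongr)) n.cast_nonneg)
  rw [hmin b hab] at hZ
  rw [hmin a le_rfl] at hW
  exact measureReal_nonneg_sum_sub_le_rpow hab hn hcard hindep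
    (fun k ↦ (hmZ k).aemeasurable) (fun k ↦ (hmW k).aemeasurable)
    (fun k ↦ ae_mem_Icc_and_integral_eq_of_bernoulli (by positivity) (hmZ k) (hZ k).1 (hZ k).2)
    (fun k ↦ ae_mem_Icc_and_integral_eq_of_bernoulli (by positivity) (hmW k) (hW k).1 (hW k).2)

end Sums

end Probability

theorem sbm_llr_upper_bound_no_side_info
    (a b : ℝ) (hb : 0 < b) (hab : b < a)
    (Ω : ℕ → Type*) (mΩ : ∀ n, MeasurableSpace (Ω n))
    (P : ∀ n, Measure (Ω n)) (hP : ∀ n, IsProbabilityMeasure (P n))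
    (Z W : ∀ n, Fin (half n) → Ω n → ℝ)
    (hmZ : ∀ n k, Measurable (Z n k)) (hmW : ∀ n k, Measurable (W n k))
    (hindep : ∀ n, 3 ≤ n →
      iIndepFun (Sum.elim (Z n) (W n)) (P n))
    (hZ : ∀ n, 3 ≤ n → ∀ k,
      P n {ω | Z n k ω = 1} = ENNReal.ofReal (min 1 (b * Real.log n / n)) ∧
      P n {ω | Z n k ω = 0} = 1 - ENNReal.ofReal (min 1 (b * Real.log n / n)))
    (hW : ∀ n, 3 ≤ n → ∀ k,
      P n {ω | W n k ω = 1} = ENNReal.ofReal (min 1 (a * Real.log n / n)) ∧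
      P n {ω | W n k ω = 0} = 1 - ENNReal.ofReal (min 1 (a * Real.log n / n))) :
    ∀ ε > (0 : ℝ), ∃ N : ℕ, ∀ n ≥ N,
      (P n {ω | (0 : ℝ) ≤ ∑ k, (Z n k ω - W n k ω)}).toReal
        ≤ (n : ℝ) ^ (-((Real.sqrt a - Real.sqrt b) ^ 2) / 2 + ε) := by
  intro ε hε
  obtain ⟨N, hN⟩ := eventually_atTop.1
    ((eventually_ge_atTop 3).and (eventually_mul_log_natCast_le a))
  refine ⟨N, fun n hn ↦ ?_⟩
  obtain ⟨h3, han⟩ := hN n hn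
  have hcard : (n : ℝ) / 2 ≤ Fintype.card (Fin (half n)) := by
    rw [Fintype.card_fin]
    exact Nat.le_ceil _
  exact (sbm_llr_upper_bound_no_side_info_general hb hab.le (by lia) han hcard (hindep n h3)
    (hmZ n) (hmW n) (hZ n h3) (hW n h3)).trans
    (Real.rpow_le_rpow_of_exponent_le (by norm_cast; lia) (le_add_of_nonneg_right hε.le))
end
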